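/- arXiv:2410.15852 — 5 statements merged into one kernel-verified Lean document; each statement's English description precedes it below -/
import Mathlib

section
/- For every integer n > 2, o3(n+2) + o3(n-1) = pod(n). -/
/-- No even part is repeated (all even parts are distinct). -/
def EvenDistinct {n : ℕ} (p : n.Partition) : Prop :=
  ∀ i, Even i → p.parts.count i ≤ 1

/-- No odd part is repeated (all odd parts are distinct). -/
def OddDistinct {n : ℕ} (p : n.Partition) : Prop :=
  ∀ i, Odd i → p.parts.count i ≤ 1

/-- The largest part of a partition (0 for the empty partition of 0). -/
def maxPart {n : ℕ} (p : n.Partition) : ℕ := p.parts.sup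

/-- Number of partitions of n with no odd part repeated. -/
noncomputable def pod (n : ℕ) : ℕ := Nat.card {p : n.Partition // OddDistinct p}

/-- Number of partitions of n with no odd part repeated, largest part even,
and the largest part appearing exactly once. -/
noncomputable def o3 (n : ℕ) : ℕ :=
  Nat.card {p : n.Partition // OddDistinct p ∧ p.parts ≠ 0 ∧ Even (maxPart p) ∧
    p.parts.count (maxPart p) = 1}

open PowerSeries PowerSeries.WithPiTopology Finset

open scoped Classical in
/-- Generating function of partitions all of whose (part, multiplicity) pairs satisfy `P`. -/
noncomputable def GG (P : ℕ → ℕ → Prop) : PowerSeries ℤ :=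
  Nat.Partition.genFun (fun i c => if P i c then (1 : ℤ) else 0)

open scoped Classical in
lemma coeff_GG (P : ℕ → ℕ → Prop) (n : ℕ) :
    (GG P).coeff n =
      ((univ.filter (fun p : n.Partition => ∀ i ∈ p.parts, P i (p.parts.count i))).card : ℤ) := by
  rw [GG, Nat.Partition.coeff_genFun, card_filter]
  simp_rw [Finsupp.prod, prod_boole]
  simp

open scoped Classical in
lemma GG_mul (P Q : ℕ → ℕ → Prop) (k : ℕ) (hP : ∀ c, ¬ P (k+1) c)
    (h : ∀ i c, i ≠ k + 1 → (P i c ↔ Q i c)) :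
    letI : TopologicalSpace ℤ := ⊥
    GG Q = GG P * (1 + ∑' j, (if Q (k+1) (j+1) then (1 : PowerSeries ℤ) else 0) *
      (X : PowerSeries ℤ) ^ ((k + 1) * (j + 1))) := by
  let _ : TopologicalSpace ℤ := ⊥
  have _ : DiscreteTopology ℤ := ⟨rfl⟩
  have h1 := Nat.Partition.hasProd_genFun (fun i c => if P i c then (1 : ℤ) else 0)
  have h2 := Nat.Partition.hasProd_genFun (fun i c => if Q i c then (1 : ℤ) else 0)
  simp only [PowerSeries.smul_eq_C_mul, apply_ite (PowerSeries.C (R := ℤ)), map_one, map_zero]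
    at h1 h2
  have h3 := hasProd_ite_eq k (1 + ∑' j, (if Q (k+1) (j+1) then (1 : PowerSeries ℤ) else 0) *
      (X : PowerSeries ℤ) ^ ((k + 1) * (j + 1)))
  have h4 := h1.mul h3
  refine h2.unique ?_
  convert! h4 using 1
  ext1 i
  by_cases hi : i = k
  · subst hi
    simp [hP]
  · have : ∀ c, (P (i+1) c ↔ Q (i+1) c) := fun c => h _ _ (by omega)
    simp [hi, this]

lemma GG_mul_once (P Q : ℕ → ℕ → Prop) (k : ℕ) (hk : k ≠ 0) (hP : ∀ c, ¬ P k c)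
    (h : ∀ i c, i ≠ k → (P i c ↔ Q i c)) (hQ : ∀ c, Q k c ↔ c ≤ 1) :
    GG Q = GG P * (1 + X ^ k) := by
  let _ : TopologicalSpace ℤ := ⊥
  obtain ⟨k, rfl⟩ := Nat.exists_eq_succ_of_ne_zero hk
  rw [GG_mul P Q k hP h]
  congr 2
  rw [tsum_eq_single 0]
  · simp [hQ]
  · intro b hb
    simp [hQ, hb]

open scoped Classical in
lemma GG_mul_all (P Q : ℕ → ℕ → Prop) (k : ℕ) (hk : k ≠ 0) (hP : ∀ c, ¬ P k c)
    (h : ∀ i c, i ≠ k → (P i c ↔ Q i c)) (hQ : ∀ c, Q k c) :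
    GG Q * (1 - X ^ k) = GG P := by
  let _ : TopologicalSpace ℤ := ⊥
  have _ : DiscreteTopology ℤ := ⟨rfl⟩
  obtain ⟨k, rfl⟩ := Nat.exists_eq_succ_of_ne_zero hk
  rw [GG_mul P Q k hP h]
  have : (1 + ∑' j, (if Q (k+1) (j+1) then (1 : PowerSeries ℤ) else 0) *
      (X : PowerSeries ℤ) ^ ((k + 1) * (j + 1))) = ∑' j, (X ^ (k+1)) ^ j := by
    rw [tsum_eq_zero_add' (f := fun j => ((X : PowerSeries ℤ) ^ (k+1)) ^ j) ?_]
    · simp [hQ, pow_mul]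
    · simp_rw [pow_add]
      apply Summable.mul_right
      exact summable_pow_of_constantCoeff_eq_zero (by simp)
  rw [mul_assoc, this]
  simp only [Nat.succ_eq_add_one]
  rw [tsum_pow_mul_one_sub_of_constantCoeff_eq_zero (by simp), mul_one]

/-- Odd parts below `2a`, not repeated; even parts at most `2b`. -/
def PP (a b : ℕ) (i c : ℕ) : Prop :=
  (Odd i ∧ i < 2 * a ∧ c ≤ 1) ∨ (Even i ∧ i ≤ 2 * b)

/-- As `PP (b+1) b`, but additionally `2b+2` may be used once. -/
def HH (b : ℕ) (i c : ℕ) : Prop :=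
  PP (b + 1) b i c ∨ (i = 2 * b + 2 ∧ c ≤ 1)

lemma F_odd (a b : ℕ) : GG (PP (a+1) b) = GG (PP a b) * (1 + X ^ (2*a+1)) := by
  apply GG_mul_once _ _ _ (by omega)
  · intro c; unfold PP; grind
  · intro i c hi; unfold PP; grind
  · intro c; unfold PP; grind

lemma F_even (a b : ℕ) : GG (PP a (b+1)) * (1 - X ^ (2*b+2)) = GG (PP a b) := by
  apply GG_mul_all _ _ _ (by omega)
  · intro c; unfold PP; grind
  · intro i c hi; unfold PP; grind
  · intro c; unfold PP; grind

lemma H_eq (b : ℕ) : GG (HH b) = GG (PP (b+1) b) * (1 + X ^ (2*b+2)) := by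
  apply GG_mul_once _ _ _ (by omega)
  · intro c; unfold PP; grind
  · intro i c hi; unfold HH; grind
  · intro c; unfold HH PP; grind

lemma tele (M : ℕ) : (1 + X ^ 3) * ∑ b ∈ range (M+1), (GG (HH b) - GG (PP (b+1) b))
    = X ^ 2 * GG (PP (M+2) M) := by
  induction M with
  | zero =>
    have := F_odd 1 0
    simp only [zero_add, range_one, sum_singleton, H_eq]
    simp only [Nat.reduceAdd, Nat.reduceMul] at this ⊢
    rw [this]; ring
  | succ M ih =>
    rw [sum_range_succ, mul_add, ih, H_eq, ← F_even (M+2) M, F_odd (M+2) (M+1)]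
    ring

lemma pod_eq (n M : ℕ) (h : n ≤ M) : (pod n : ℤ) = (GG (PP (M+2) M)).coeff n := by
  classical
  rw [coeff_GG, pod, Nat.card_eq_fintype_card, Fintype.card_subtype]
  congr 2
  ext p
  rw [mem_filter, mem_filter]
  simp only [mem_univ, true_and]
  unfold OddDistinct PP
  constructor
  · intro hp i hi
    have := Nat.Partition.le_of_mem_parts hi
    rcases Nat.even_or_odd i with h1 | h1
    · right; exact ⟨h1, by omega⟩
    · left; exact ⟨h1, by omega, hp i h1⟩
  · intro hp i hi
    by_cases hm : i ∈ p.parts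
    · rcases hp i hm with h1 | h1
      · exact h1.2.2
      · exact absurd h1.1 (by simpa using hi)
    · simp [Multiset.count_eq_zero_of_notMem hm]

lemma maxPart_eq {n : ℕ} (p : n.Partition) (m : ℕ) (hm : m ∈ p.parts)
    (h : ∀ i ∈ p.parts, i ≤ m) : maxPart p = m :=
  le_antisymm (Multiset.sup_le.2 h) (Multiset.le_sup hm)

lemma maxPart_mem {n : ℕ} (p : n.Partition) (h : p.parts ≠ 0) : maxPart p ∈ p.parts := by
  obtain ⟨m, hm, hle⟩ := Finset.exists_max_image p.parts.toFinset id
    (by simpa [Multiset.toFinset_nonempty] using h)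
  simp only [Multiset.mem_toFinset, id] at hm hle
  rw [maxPart_eq p m hm hle]; exact hm

lemma o3_iff {n b : ℕ} (p : n.Partition) :
    ((OddDistinct p ∧ p.parts ≠ 0 ∧ Even (maxPart p) ∧ p.parts.count (maxPart p) = 1) ∧
      maxPart p = 2 * b + 2) ↔
    ((∀ i ∈ p.parts, HH b i (p.parts.count i)) ∧
      ¬ ∀ i ∈ p.parts, PP (b+1) b i (p.parts.count i)) := by
  constructor
  · rintro ⟨⟨ho, h0, he, hc⟩, hm⟩
    have hmem := maxPart_mem p h0
    rw [hm] at hc hmem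
    constructor
    · intro i hi
      have : i ≤ maxPart p := Multiset.le_sup hi
      have := ho i
      unfold HH PP
      grind
    · intro hall
      have := hall _ hmem
      unfold PP at this
      grind
  · rintro ⟨h1, h2⟩
    push Not at h2
    obtain ⟨i, hi, hn⟩ := h2
    have h3 : i = 2 * b + 2 ∧ p.parts.count i ≤ 1 := (h1 i hi).resolve_left hn
    obtain ⟨rfl, hc⟩ := h3
    have hm : maxPart p = 2 * b + 2 := maxPart_eq p _ hi (by
      intro j hj
      have := h1 j hj
      unfold HH PP at this
      grind)
    have hc' := Multiset.one_le_count_iff_mem.2 hi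
    refine ⟨⟨?_, ?_, ?_, ?_⟩, hm⟩
    · intro j hj
      by_cases hjm : j ∈ p.parts
      · have := h1 j hjm
        unfold HH PP at this
        grind
      · simp [Multiset.count_eq_zero_of_notMem hjm]
    · intro h; simp [h] at hi
    · rw [hm]; grind
    · rw [hm]; omega

lemma o3_eq (n M : ℕ) (h : n ≤ M) :
    (o3 n : ℤ) = (∑ b ∈ range (M+1), (GG (HH b) - GG (PP (b+1) b))).coeff n := by
  classical
  rw [map_sum, o3, Nat.card_eq_fintype_card, Fintype.card_subtype]
  rw [card_eq_sum_card_fiberwise (f := fun p => maxPart p / 2 - 1) (t := range (M+1))]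
  · push_cast
    refine sum_congr rfl fun b _ => ?_
    rw [map_sub, coeff_GG, coeff_GG, eq_sub_iff_add_eq]
    rw [← Nat.cast_add, ← card_union_of_disjoint]
    · congr 2
      ext p
      have := o3_iff (b := b) p
      have h2 : (∀ i ∈ p.parts, PP (b+1) b i (p.parts.count i)) →
        (∀ i ∈ p.parts, HH b i (p.parts.count i)) := fun h i hi => Or.inl (h i hi)
      have h3 : (OddDistinct p ∧ p.parts ≠ 0 ∧ Even (maxPart p) ∧
        p.parts.count (maxPart p) = 1) → (maxPart p / 2 - 1 = b ↔ maxPart p = 2 * b + 2) := by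
        rintro ⟨_, h0, he, _⟩
        have := p.parts_pos (maxPart_mem p h0)
        grind
      rw [mem_union, mem_filter, mem_filter, mem_filter, mem_filter]
      simp only [mem_univ, true_and]
      generalize (OddDistinct p ∧ p.parts ≠ 0 ∧ Even (maxPart p) ∧
        p.parts.count (maxPart p) = 1) = A at *
      generalize (∀ i ∈ p.parts, PP (b+1) b i (p.parts.count i)) = B at *
      generalize (∀ i ∈ p.parts, HH b i (p.parts.count i)) = C at *
      generalize (maxPart p / 2 - 1 = b) = D at *
      generalize (maxPart p = 2 * b + 2) = E at *
      clear * - this h2 h3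
      tauto
    · rw [disjoint_left]
      intro p hp hq
      simp only [mem_filter, mem_univ, true_and] at hp hq
      obtain ⟨⟨_, h0, he, _⟩, hb⟩ := hp
      have hm := maxPart_mem p h0
      have := p.parts_pos hm
      have := hq _ hm
      unfold PP at this
      grind
  · intro p hp
    simp only [coe_filter, mem_univ, true_and, Set.mem_setOf_eq] at hp
    have := Nat.Partition.le_of_mem_parts (maxPart_mem p hp.2.1)
    simp only [coe_range, Set.mem_Iio]
    omega

theorem o3_add_o3_eq_pod : ∀ n : ℕ, 2 < n → o3 (n + 2) + o3 (n - 1) = pod n := by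
  intro n hn
  have h := congrArg (PowerSeries.coeff (n+2)) (tele (n+2))
  rw [PowerSeries.coeff_X_pow_mul, ← pod_eq n _ (by omega), add_mul, one_mul, map_add,
    ← o3_eq (n+2) _ le_rfl] at h
  obtain ⟨k, rfl⟩ : ∃ k, n = k + 1 := ⟨n - 1, by omega⟩
  rw [show k + 1 + 2 = k + 3 from rfl, PowerSeries.coeff_X_pow_mul,
    ← o3_eq k _ (by omega)] at h
  simp only [Nat.add_sub_cancel]
  exact_mod_cast h
end

section
/- For every integer n ≥ 2, d1(n-1) equals the number of partitions of n in which no even part is repeated and the largest part is even. (The bijection adds 1 to one copy of the largest part.) -/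
/-- Number of partitions of n with no even part repeated and largest part odd. -/
noncomputable def d1 (n : ℕ) : ℕ :=
  Nat.card {p : n.Partition // EvenDistinct p ∧ p.parts ≠ 0 ∧ Odd (maxPart p)}


lemma aux_sup {m : ℕ} {t : Multiset ℕ} (h : ∀ x ∈ t, x ≤ m) : (m ::ₘ t).sup = m := by
  rw [Multiset.sup_cons]
  exact sup_eq_left.2 (Multiset.sup_le.2 h)

lemma aux_sup_mem (s : Multiset ℕ) : s ≠ 0 → s.sup ∈ s := by
  induction s using Multiset.induction with
  | empty => intro h; exact absurd rfl h
  | cons a s ih =>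
    intro _
    rw [Multiset.sup_cons]
    by_cases hs : s = 0
    · subst hs; simp
    · rcases le_total a s.sup with h | h
      · rw [sup_eq_right.2 h]; exact Multiset.mem_cons_of_mem (ih hs)
      · rw [sup_eq_left.2 h]; exact Multiset.mem_cons_self _ _

lemma aux_decomp (s : Multiset ℕ) (h : s ≠ 0) :
    ∃ m t, s = m ::ₘ t ∧ s.sup = m ∧ ∀ x ∈ t, x ≤ m :=
  ⟨s.sup, s.erase s.sup, (Multiset.cons_erase (aux_sup_mem s h)).symm, rfl,
    fun _ hx => Multiset.le_sup (Multiset.mem_of_mem_erase hx)⟩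

def auxUp (s : Multiset ℕ) : Multiset ℕ := (s.sup + 1) ::ₘ s.erase s.sup
def auxDown (s : Multiset ℕ) : Multiset ℕ := (s.sup - 1) ::ₘ s.erase s.sup

def AuxE (s : Multiset ℕ) : Prop := ∀ i, Even i → s.count i ≤ 1

lemma aux_up {s : Multiset ℕ} (hp : ∀ i ∈ s, 0 < i) (hE : AuxE s) (h0 : s ≠ 0)
    (ho : Odd s.sup) :
    (∀ i ∈ auxUp s, 0 < i) ∧ (auxUp s).sum = s.sum + 1 ∧ AuxE (auxUp s) ∧ auxUp s ≠ 0 ∧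
      Even (auxUp s).sup ∧ auxDown (auxUp s) = s := by
  obtain ⟨m, t, rfl, hm, ht⟩ := aux_decomp s h0
  rw [hm] at ho
  have hu : auxUp (m ::ₘ t) = (m + 1) ::ₘ t := by simp [auxUp, hm]
  have hs : ((m + 1) ::ₘ t).sup = m + 1 := aux_sup fun x hx => (ht x hx).trans (Nat.le_succ m)
  rw [hu]
  refine ⟨?_, ?_, ?_, Multiset.cons_ne_zero, ?_, ?_⟩
  · intro i hi
    rcases Multiset.mem_cons.1 hi with rfl | hi
    · omega
    · exact hp i (Multiset.mem_cons_of_mem hi)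
  · simp; omega
  · intro i hi
    by_cases him : i = m + 1
    · subst him
      have : m + 1 ∉ t := fun h => by have := ht _ h; omega
      simp [Multiset.count_eq_zero_of_notMem this]
    · rw [Multiset.count_cons_of_ne him]
      exact (Multiset.count_le_count_cons _ _ _).trans (hE i hi)
  · rw [hs]; exact ho.add_one
  · simp [auxDown, hs]

lemma aux_down {s : Multiset ℕ} (hp : ∀ i ∈ s, 0 < i) (hE : AuxE s) (h0 : s ≠ 0)
    (ho : Even s.sup) :
    (∀ i ∈ auxDown s, 0 < i) ∧ (auxDown s).sum + 1 = s.sum ∧ AuxE (auxDown s) ∧ auxDown s ≠ 0 ∧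
      Odd (auxDown s).sup ∧ auxUp (auxDown s) = s := by
  obtain ⟨m, t, rfl, hm, ht⟩ := aux_decomp s h0
  rw [hm] at ho
  have hmp := hp m (Multiset.mem_cons_self _ _)
  obtain ⟨k, rfl⟩ : ∃ k, m = k + 1 := ⟨m - 1, by omega⟩
  have hko : Odd k := by
    rcases Nat.even_or_odd k with h | h
    · exact absurd ho (Nat.not_even_iff_odd.2 h.add_one)
    · exact h
  have hu : auxDown ((k + 1) ::ₘ t) = k ::ₘ t := by simp [auxDown, hm]
  have hnot : k + 1 ∉ t := by
    intro h
    have h1 := hE _ ho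
    rw [Multiset.count_cons_self] at h1
    have := Multiset.count_pos.2 h
    omega
  have ht' : ∀ x ∈ t, x ≤ k := by
    intro x hx
    have h1 := ht x hx
    have h2 : x ≠ k + 1 := fun h => hnot (h ▸ hx)
    omega
  have hs : (k ::ₘ t).sup = k := aux_sup ht'
  rw [hu]
  refine ⟨?_, ?_, ?_, Multiset.cons_ne_zero, ?_, ?_⟩
  · intro i hi
    rcases Multiset.mem_cons.1 hi with rfl | hi
    · exact hko.pos
    · exact hp i (Multiset.mem_cons_of_mem hi)
  · simp; omega
  · intro i hi
    have him : i ≠ k := fun h => Nat.not_even_iff_odd.2 hko (h ▸ hi)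
    rw [Multiset.count_cons_of_ne him]
    exact (Multiset.count_le_count_cons _ _ _).trans (hE i hi)
  · rw [hs]; exact hko
  · simp [auxUp, hs]

theorem d1_eq_card_largest_even : ∀ n : ℕ, 2 ≤ n →
    d1 (n - 1) =
      Nat.card {p : n.Partition // EvenDistinct p ∧ p.parts ≠ 0 ∧ Even (maxPart p)} := by
  intro n hn
  obtain ⟨k, rfl⟩ : ∃ k, n = k + 1 := ⟨n - 1, by omega⟩
  rw [Nat.add_sub_cancel, d1]
  have U (p : {p : k.Partition // EvenDistinct p ∧ p.parts ≠ 0 ∧ Odd (maxPart p)}) :=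
    aux_up (s := p.1.parts) (fun _ h => p.1.parts_pos h) p.2.1 p.2.2.1 p.2.2.2
  have D (p : {p : (k + 1).Partition // EvenDistinct p ∧ p.parts ≠ 0 ∧ Even (maxPart p)}) :=
    aux_down (s := p.1.parts) (fun _ h => p.1.parts_pos h) p.2.1 p.2.2.1 p.2.2.2
  exact Nat.card_congr
    { toFun := fun p => ⟨⟨auxUp p.1.parts, fun {i} h => (U p).1 i h, by
          rw [(U p).2.1, p.1.parts_sum]⟩,
        (U p).2.2.1, (U p).2.2.2.1, (U p).2.2.2.2.1⟩
      invFun := fun p => ⟨⟨auxDown p.1.parts, fun {i} h => (D p).1 i h, by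
          have := (D p).2.1
          rw [p.1.parts_sum] at this
          omega⟩,
        (D p).2.2.1, (D p).2.2.2.1, (D p).2.2.2.2.1⟩
      left_inv := fun p => Subtype.ext (Nat.Partition.ext (U p).2.2.2.2.2)
      right_inv := fun p => Subtype.ext (Nat.Partition.ext (D p).2.2.2.2.2) }
end

section
/- For every integer n ≥ 2, o1(n-1) equals the number of partitions of n in which no odd part is repeated and the largest part is odd. (The bijection adds 1 to one copy of the largest part.) -/
/-- Number of partitions of n with no odd part repeated and largest part even. -/
noncomputable def o1 (n : ℕ) : ℕ :=
  Nat.card {p : n.Partition // OddDistinct p ∧ p.parts ≠ 0 ∧ Even (maxPart p)}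

theorem sup_cons_aux (m : ℕ) (t : Multiset ℕ) (h : ∀ x ∈ t, x ≤ m) : (m ::ₘ t).sup = m := by
  rw [Multiset.sup_cons]
  exact sup_eq_left.2 (Multiset.sup_le.2 h)

theorem decomp_aux (s : Multiset ℕ) (hs : s ≠ 0) :
    ∃ m t, s = m ::ₘ t ∧ ∀ x ∈ t, x ≤ m := by
  induction s using Multiset.induction with
  | empty => exact absurd rfl hs
  | cons a s ih =>
    by_cases h0 : s = 0
    · exact ⟨a, s, rfl, by simp [h0]⟩
    · obtain ⟨m, t, rfl, h⟩ := ih h0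
      rcases le_total m a with hma | hma
      · refine ⟨a, m ::ₘ t, rfl, ?_⟩
        intro x hx
        rcases Multiset.mem_cons.1 hx with rfl | hx
        · exact hma
        · exact (h x hx).trans hma
      · refine ⟨m, a ::ₘ t, Multiset.cons_swap _ _ _, ?_⟩
        intro x hx
        rcases Multiset.mem_cons.1 hx with rfl | hx
        · exact hma
        · exact h x hx

def upM (s : Multiset ℕ) : Multiset ℕ := (s.sup + 1) ::ₘ s.erase s.sup
def downM (s : Multiset ℕ) : Multiset ℕ := (s.sup - 1) ::ₘ s.erase s.sup

theorem upM_cons (m : ℕ) (t : Multiset ℕ) (h : ∀ x ∈ t, x ≤ m) :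
    upM (m ::ₘ t) = (m + 1) ::ₘ t := by
  simp only [upM, sup_cons_aux m t h, Multiset.erase_cons_head]

theorem downM_cons (m : ℕ) (t : Multiset ℕ) (h : ∀ x ∈ t, x ≤ m) :
    downM (m ::ₘ t) = (m - 1) ::ₘ t := by
  simp only [downM, sup_cons_aux m t h, Multiset.erase_cons_head]

def PE (n : ℕ) (s : Multiset ℕ) : Prop :=
  (∀ i ∈ s, 0 < i) ∧ s.sum = n ∧ (∀ i, Odd i → s.count i ≤ 1) ∧ s ≠ 0 ∧ Even s.sup
def PO (n : ℕ) (s : Multiset ℕ) : Prop :=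
  (∀ i ∈ s, 0 < i) ∧ s.sum = n ∧ (∀ i, Odd i → s.count i ≤ 1) ∧ Odd s.sup

theorem up_aux (n : ℕ) (s : Multiset ℕ) (h : PE n s) :
    PO (n + 1) (upM s) ∧ downM (upM s) = s := by
  obtain ⟨hp, hs, hd, h0, he⟩ := h
  obtain ⟨m, t, rfl, ht⟩ := decomp_aux s h0
  rw [sup_cons_aux m t ht] at he
  have ht' : ∀ x ∈ t, x ≤ m + 1 := fun x hx => (ht x hx).trans (Nat.le_succ m)
  rw [upM_cons m t ht, downM_cons _ t ht']
  refine ⟨⟨?_, ?_, ?_, ?_⟩, rfl⟩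
  · intro i hi
    rcases Multiset.mem_cons.1 hi with rfl | hi
    · omega
    · exact hp i (Multiset.mem_cons_of_mem hi)
  · rw [Multiset.sum_cons] at hs ⊢
    omega
  · intro i hi
    rw [Multiset.count_cons]
    split_ifs with hc
    · have : t.count i = 0 := Multiset.count_eq_zero.2 fun hx => by
        have := ht i hx
        omega
      omega
    · exact (Multiset.count_le_count_cons i m t).trans (hd i hi)
  · rw [sup_cons_aux _ t ht']
    exact he.add_one

theorem down_aux (n : ℕ) (hn : 1 ≤ n) (s : Multiset ℕ) (h : PO (n + 1) s) :
    PE n (downM s) ∧ upM (downM s) = s := by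
  obtain ⟨hp, hs, hd, he⟩ := h
  have h0 : s ≠ 0 := by
    rintro rfl
    simp at hs
  obtain ⟨m, t, rfl, ht⟩ := decomp_aux s h0
  rw [sup_cons_aux m t ht] at he
  have hm : m ∉ t := by
    have := hd m he
    rw [Multiset.count_cons_self] at this
    exact Multiset.count_eq_zero.1 (by omega)
  have hm0 := he.pos
  have ht' : ∀ x ∈ t, x ≤ m - 1 := fun x hx => by
    have h1 := ht x hx
    have h2 : x ≠ m := fun h => hm (h ▸ hx)
    omega
  have hev : Even (m - 1) := by
    obtain ⟨k, rfl⟩ := he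
    exact ⟨k, by omega⟩
  have hm1 : m ≠ 1 := by
    rintro rfl
    have : t = 0 := Multiset.eq_zero_of_forall_notMem fun x hx => by
      have h1 := ht' x hx
      have h2 := hp x (Multiset.mem_cons_of_mem hx)
      omega
    subst this
    simp at hs
    omega
  rw [downM_cons m t ht, upM_cons _ t ht']
  refine ⟨⟨?_, ?_, ?_, ?_, ?_⟩, ?_⟩
  · intro i hi
    rcases Multiset.mem_cons.1 hi with rfl | hi
    · omega
    · exact hp i (Multiset.mem_cons_of_mem hi)
  · rw [Multiset.sum_cons] at hs ⊢
    omega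
  · intro i hi
    have hne : i ≠ m - 1 := by
      rintro rfl
      exact (Nat.not_odd_iff_even.2 hev) hi
    rw [Multiset.count_cons_of_ne hne]
    exact (Multiset.count_le_count_cons i m t).trans (hd i hi)
  · exact Multiset.cons_ne_zero
  · rw [sup_cons_aux _ t ht']
    exact hev
  · rw [Nat.sub_add_cancel hm0]

theorem o1_eq_card_largest_odd : ∀ n : ℕ, 2 ≤ n →
    o1 (n - 1) =
      Nat.card {p : n.Partition // OddDistinct p ∧ Odd (maxPart p)} := by
  intro n hn
  obtain ⟨k, rfl⟩ : ∃ k, n = k + 1 := ⟨n - 1, by omega⟩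
  rw [Nat.add_sub_cancel]
  have hE : ∀ p : {p : k.Partition // OddDistinct p ∧ p.parts ≠ 0 ∧ Even (maxPart p)},
      PE k p.1.parts := fun p => ⟨fun _ h => p.1.parts_pos h, p.1.parts_sum, p.2⟩
  have hO : ∀ p : {p : (k + 1).Partition // OddDistinct p ∧ Odd (maxPart p)},
      PO (k + 1) p.1.parts := fun p => ⟨fun _ h => p.1.parts_pos h, p.1.parts_sum, p.2⟩
  refine Nat.card_congr
    { toFun := fun p => ⟨⟨upM p.1.parts, fun {i} h => (up_aux k _ (hE p)).1.1 i h,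
        (up_aux k _ (hE p)).1.2.1⟩, (up_aux k _ (hE p)).1.2.2⟩
      invFun := fun p => ⟨⟨downM p.1.parts,
        fun {i} h => (down_aux k (by omega) _ (hO p)).1.1 i h,
        (down_aux k (by omega) _ (hO p)).1.2.1⟩, (down_aux k (by omega) _ (hO p)).1.2.2⟩
      left_inv := fun p => Subtype.ext (Nat.Partition.ext (up_aux k _ (hE p)).2)
      right_inv := fun p => Subtype.ext
        (Nat.Partition.ext (down_aux k (by omega) _ (hO p)).2) }
end

section
/- For every integer n ≥ 4, d2(n-3) equals the number of partitions of n in which no even part is repeated, the largest part is odd, and the second largest part equals the largest part minus 1 (i.e., partitions of the form (2j+1, 2j, h, ...) with h ≤ 2j - 1 and no even part repeated). (The bijection adds 2 to one copy of the largest part and 1 to the other copy of the largest part.) -/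
/-- Number of partitions of n with no even part repeated, largest part odd,
and the largest part appearing at least twice. -/
noncomputable def d2 (n : ℕ) : ℕ :=
  Nat.card {p : n.Partition // EvenDistinct p ∧ Odd (maxPart p) ∧
    2 ≤ p.parts.count (maxPart p)}

def TT (m : ℕ) : Type :=
  {x : ℕ × Multiset ℕ // Odd x.1 ∧ (∀ i ∈ x.2, 0 < i ∧ i ≤ x.1) ∧
    (∀ i, Even i → x.2.count i ≤ 1) ∧ 2 * x.1 + x.2.sum = m}

lemma sup_aux (a b : ℕ) (s : Multiset ℕ) (hb : b ≤ a) (h : ∀ i ∈ s, i ≤ a) :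
    (a ::ₘ b ::ₘ s).sup = a := by
  apply le_antisymm
  · rw [Multiset.sup_le]
    intro i hi
    simp only [Multiset.mem_cons] at hi
    rcases hi with rfl | rfl | hi
    · exact le_rfl
    · exact hb
    · exact h i hi
  · exact Multiset.le_sup (by simp)

def toL (m : ℕ) (x : TT m) : {p : m.Partition // EvenDistinct p ∧ Odd (maxPart p) ∧
    2 ≤ p.parts.count (maxPart p)} :=
  ⟨⟨x.1.1 ::ₘ x.1.1 ::ₘ x.1.2, by
      obtain ⟨⟨M, s⟩, h1, h2, h3, h4⟩ := x
      intro i hi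
      simp only [Multiset.mem_cons] at hi
      rcases hi with rfl | rfl | hi
      · exact h1.pos
      · exact h1.pos
      · exact (h2 i hi).1, by
      obtain ⟨⟨M, s⟩, h1, h2, h3, h4⟩ := x
      have h4 : 2 * M + s.sum = m := h4
      simp only [Multiset.sum_cons]
      omega⟩, by
    obtain ⟨⟨M, s⟩, h1, h2, h3, h4⟩ := x
    have hs := sup_aux M M s le_rfl (fun i hi => (h2 i hi).2)
    refine ⟨?_, ?_, ?_⟩
    · intro i hi
      have : i ≠ M := by
        rintro rfl
        exact (Nat.not_even_iff_odd.2 h1) hi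
      simpa [Multiset.count_cons_of_ne this] using h3 i hi
    · simpa [maxPart, hs] using h1
    · simp only [maxPart, hs]
      simp⟩

def toR (m : ℕ) (x : TT m) : {p : (m + 3).Partition // EvenDistinct p ∧ Odd (maxPart p) ∧
        p.parts.count (maxPart p) = 1 ∧ maxPart p - 1 ∈ p.parts} :=
  ⟨⟨(x.1.1 + 2) ::ₘ (x.1.1 + 1) ::ₘ x.1.2, by
      obtain ⟨⟨M, s⟩, h1, h2, h3, h4⟩ := x
      intro i hi
      simp only [Multiset.mem_cons] at hi
      rcases hi with rfl | rfl | hi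
      · omega
      · omega
      · exact (h2 i hi).1, by
      obtain ⟨⟨M, s⟩, h1, h2, h3, h4⟩ := x
      have h4 : 2 * M + s.sum = m := h4
      simp only [Multiset.sum_cons]
      omega⟩, by
    obtain ⟨⟨M, s⟩, h1, h2, h3, h4⟩ := x
    simp only at h1 h2 h3 h4
    have hs := sup_aux (M + 2) (M + 1) s (by omega)
      (fun i hi => (h2 i hi).2.trans (by omega))
    have c1 : s.count (M + 1) = 0 := Multiset.count_eq_zero.2 fun h => by
      have := (h2 _ h).2
      omega
    have c2 : s.count (M + 2) = 0 := Multiset.count_eq_zero.2 fun h => by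
      have := (h2 _ h).2
      omega
    refine ⟨?_, ?_, ?_, ?_⟩
    · intro i hi
      have h3i := h3 i hi
      have : i ≠ M + 2 := by
        rintro rfl
        obtain ⟨a, ha⟩ := h1
        obtain ⟨b, hb⟩ := hi
        omega
      rw [Multiset.count_cons_of_ne this, Multiset.count_cons]
      split_ifs with h
      · subst h
        change s.count (M + 1) + 1 ≤ 1
        omega
      · exact h3i
    · simp only [maxPart, hs]
      exact h1.add_even (by decide)
    · simp only [maxPart, hs]
      simp [Multiset.count_cons, c2]
    · simp only [maxPart, hs]
      simp⟩

lemma toL_bij (m : ℕ) : Function.Bijective (toL m) := by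
  constructor
  · rintro ⟨⟨M, s⟩, h1, h2, h3, h4⟩ ⟨⟨N, t⟩, k1, k2, k3, k4⟩ h
    have h : M ::ₘ M ::ₘ s = N ::ₘ N ::ₘ t := congrArg (fun p => p.1.parts) h
    have e : M = N := by
      rw [← sup_aux M M s le_rfl (fun i hi => (h2 i hi).2), h,
        sup_aux N N t le_rfl (fun i hi => (k2 i hi).2)]
    subst e
    have e : s = t := by simpa using h
    subst e
    rfl
  · rintro ⟨⟨p, hp, hsum⟩, h1, h2, h3⟩
    suffices h : ∃ a, (toL m a).1.parts = p by
      obtain ⟨a, ha⟩ := h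
      exact ⟨a, Subtype.ext (Nat.Partition.ext ha)⟩
    simp only [maxPart, EvenDistinct] at h1 h2 h3
    have hM : ∀ i ∈ p, i ≤ p.sup := fun i hi => Multiset.le_sup hi
    generalize p.sup = M at *
    obtain ⟨q, rfl⟩ := Multiset.exists_cons_of_mem
      (Multiset.count_pos.1 (by omega : 0 < p.count M))
    rw [Multiset.count_cons_self] at h3
    obtain ⟨s, rfl⟩ := Multiset.exists_cons_of_mem
      (Multiset.count_pos.1 (by omega : 0 < q.count M))
    refine ⟨⟨(M, s), h2, fun i hi => ⟨hp (by simp [hi]), hM i (by simp [hi])⟩, ?_, ?_⟩, ?_⟩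
    · intro i hi
      exact (Multiset.count_le_of_le i ((Multiset.le_cons_self _ _).trans
        (Multiset.le_cons_self _ _))).trans (h1 i hi)
    · simp only [Multiset.sum_cons] at hsum
      simp only
      omega
    · rfl

lemma toR_bij (m : ℕ) : Function.Bijective (toR m) := by
  constructor
  · rintro ⟨⟨M, s⟩, h1, h2, h3, h4⟩ ⟨⟨N, t⟩, k1, k2, k3, k4⟩ h
    have h : (M + 2) ::ₘ (M + 1) ::ₘ s = (N + 2) ::ₘ (N + 1) ::ₘ t :=
      congrArg (fun p => p.1.parts) h
    have e : M + 2 = N + 2 := by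
      rw [← sup_aux (M + 2) (M + 1) s (by omega) (fun i hi => (h2 i hi).2.trans (by simp)), h,
        sup_aux (N + 2) (N + 1) t (by omega) (fun i hi => (k2 i hi).2.trans (by simp))]
    have e : M = N := by omega
    subst e
    have e : s = t := by simpa using h
    subst e
    rfl
  · rintro ⟨⟨p, hp, hsum⟩, h1, h2, h3, h5⟩
    suffices h : ∃ a, (toR m a).1.parts = p by
      obtain ⟨a, ha⟩ := h
      exact ⟨a, Subtype.ext (Nat.Partition.ext ha)⟩
    simp only [maxPart, EvenDistinct] at h1 h2 h3 h5
    have hM : ∀ i ∈ p, i ≤ p.sup := fun i hi => Multiset.le_sup hi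
    generalize p.sup = K at *
    have hK : 0 < K - 1 := hp h5
    obtain ⟨M, rfl⟩ : ∃ M, K = M + 2 := ⟨K - 2, by omega⟩
    have hodd : Odd M := by
      obtain ⟨a, ha⟩ := h2
      exact ⟨a - 1, by omega⟩
    obtain ⟨q, rfl⟩ := Multiset.exists_cons_of_mem
      (Multiset.count_pos.1 (by omega : 0 < p.count (M + 2)))
    have h5 : M + 1 ∈ q := by
      have h5 : M + 1 ∈ (M + 2) ::ₘ q := h5
      simpa using h5
    obtain ⟨s, rfl⟩ := Multiset.exists_cons_of_mem h5
    have c1 := h1 (M + 1) hodd.add_one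
    simp [Multiset.count_cons] at c1 h3
    refine ⟨⟨(M, s), hodd, fun i hi => ⟨hp (by simp [hi]), ?_⟩, ?_, ?_⟩, ?_⟩
    · have := hM i (by simp [hi])
      have n1 : i ≠ M + 1 := by
        rintro rfl
        exact c1 hi
      have n2 : i ≠ M + 2 := by
        rintro rfl
        exact h3 hi
      simp only
      omega
    · intro i hi
      exact (Multiset.count_le_of_le i ((Multiset.le_cons_self _ _).trans
        (Multiset.le_cons_self _ _))).trans (h1 i hi)
    · simp only [Multiset.sum_cons] at hsum
      simp only
      omega
    · rfl

theorem d2_eq_card_largest_odd_second_pred : ∀ n : ℕ, 4 ≤ n →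
    d2 (n - 3) =
      Nat.card {p : n.Partition // EvenDistinct p ∧ Odd (maxPart p) ∧
        p.parts.count (maxPart p) = 1 ∧ maxPart p - 1 ∈ p.parts} := by
  intro n hn
  obtain ⟨m, rfl⟩ : ∃ m, n = m + 3 := ⟨n - 3, by omega⟩
  rw [Nat.add_sub_cancel, d2]
  exact Nat.card_congr ((Equiv.ofBijective _ (toL_bij m)).symm.trans
    (Equiv.ofBijective _ (toR_bij m)))
end

section
/- For every integer n ≥ 2, o3(n-1) equals the number of partitions of n in which no odd part is repeated, the largest part is odd, and the largest part minus 1 does not occur as a part. (The bijection adds 1 to the largest part.) -/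
def Good (k : ℕ) (q : ℕ × Multiset ℕ) : Prop :=
  Even q.1 ∧ 0 < q.1 ∧ (∀ x ∈ q.2, 0 < x ∧ x < q.1) ∧
    (∀ i, Odd i → q.2.count i ≤ 1) ∧ q.1 + q.2.sum = k

theorem sup_cons_of_lt {m : ℕ} {s : Multiset ℕ} (h : ∀ x ∈ s, x < m) :
    (m ::ₘ s).sup = m := by
  rw [Multiset.sup_cons]
  exact sup_eq_left.2 (Multiset.sup_le.2 fun x hx => (h x hx).le)

theorem sup_mem_of_ne {s : Multiset ℕ} (h : s ≠ 0) : s.sup ∈ s := by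
  induction s using Multiset.induction with
  | empty => exact absurd rfl h
  | cons a s ih =>
    rw [Multiset.sup_cons]
    by_cases hs : s = 0
    · subst hs; simp
    · rcases le_total a s.sup with h1 | h1
      · rw [sup_eq_right.2 h1]; exact Multiset.mem_cons_of_mem (ih hs)
      · rw [sup_eq_left.2 h1]; exact Multiset.mem_cons_self _ _

theorem sup_decomp {s : Multiset ℕ} (h : s.count s.sup = 1) :
    ∃ t, s = s.sup ::ₘ t ∧ ∀ x ∈ t, x < s.sup := by
  have hm : s.sup ∈ s := Multiset.count_pos.1 (by omega)
  obtain ⟨t, ht⟩ := Multiset.exists_cons_of_mem hm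
  refine ⟨t, ht, fun x hx => ?_⟩
  have hle : x ≤ s.sup := Multiset.le_sup (by rw [ht]; exact Multiset.mem_cons_of_mem hx)
  refine lt_of_le_of_ne hle fun hxe => ?_
  have h1 : (s.sup ::ₘ t).count s.sup = 1 := by rw [← ht]; exact h
  rw [Multiset.count_cons_self] at h1
  have := Multiset.count_pos.2 hx
  rw [hxe] at this
  omega

def toA {k : ℕ} (q : {q // Good k q}) : k.Partition where
  parts := q.1.1 ::ₘ q.1.2
  parts_pos := by
    obtain ⟨q, h1, h2, h3, h4, h5⟩ := q
    intro i hi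
    rcases Multiset.mem_cons.1 hi with rfl | hi
    · exact h2
    · exact (h3 i hi).1
  parts_sum := by
    rw [Multiset.sum_cons]; exact q.2.2.2.2.2

def toB {k : ℕ} (q : {q // Good k q}) : (k + 1).Partition where
  parts := (q.1.1 + 1) ::ₘ q.1.2
  parts_pos := by
    obtain ⟨q, h1, h2, h3, h4, h5⟩ := q
    intro i hi
    rcases Multiset.mem_cons.1 hi with rfl | hi
    · omega
    · exact (h3 i hi).1
  parts_sum := by
    have := q.2.2.2.2.2
    rw [Multiset.sum_cons]; omega

theorem maxA {k : ℕ} (q : {q // Good k q}) : maxPart (toA q) = q.1.1 :=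
  sup_cons_of_lt fun x hx => (q.2.2.2.1 x hx).2

theorem maxB {k : ℕ} (q : {q // Good k q}) : maxPart (toB q) = q.1.1 + 1 :=
  sup_cons_of_lt fun x hx => ((q.2.2.2.1 x hx).2).trans (Nat.lt_succ_self _)

theorem cardA (k : ℕ) : Nat.card {q // Good k q} = o3 k := by
  refine Nat.card_eq_of_bijective (fun q => ⟨toA q, ?_⟩) ⟨?_, ?_⟩
  · rw [maxA]
    obtain ⟨⟨m, s⟩, h1, h2, h3, h4, h5⟩ := q
    refine ⟨fun i hi => ?_, Multiset.cons_ne_zero, h1, ?_⟩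
    · change (m ::ₘ s).count i ≤ 1
      have : i ≠ m := by rintro rfl; exact (Nat.not_even_iff_odd.2 hi) h1
      rw [Multiset.count_cons_of_ne this]; exact h4 i hi
    · change (m ::ₘ s).count m = 1
      rw [Multiset.count_cons_self, Multiset.count_eq_zero_of_notMem]
      exact fun h => lt_irrefl _ (h3 m h).2
  · intro a b hab
    have h : toA a = toA b := congrArg Subtype.val hab
    have hm : a.1.1 = b.1.1 := by rw [← maxA, ← maxA, h]
    have hp : a.1.1 ::ₘ a.1.2 = b.1.1 ::ₘ b.1.2 := congrArg Nat.Partition.parts h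
    rw [hm, Multiset.cons_inj_right] at hp
    exact Subtype.ext (Prod.ext hm hp)
  · rintro ⟨p, h1, h2, h3, h4⟩
    obtain ⟨t, ht, hlt⟩ := sup_decomp h4
    have hmem : p.parts.sup ∈ p.parts := sup_mem_of_ne h2
    refine ⟨⟨(p.parts.sup, t), h3, p.parts_pos hmem, fun x hx => ⟨p.parts_pos ?_, hlt x hx⟩,
      fun i hi => ?_, ?_⟩, ?_⟩
    · rw [ht]; exact Multiset.mem_cons_of_mem hx
    · refine le_trans (Multiset.count_le_of_le i ?_) (h1 i hi)
      conv_rhs => rw [ht]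
      exact Multiset.le_cons_self _ _
    · have := p.parts_sum
      rw [ht, Multiset.sum_cons] at this
      exact this
    · exact Subtype.ext (Nat.Partition.ext ht.symm)

theorem cardB (k : ℕ) (hk : 1 ≤ k) : Nat.card {q // Good k q} =
    Nat.card {p : (k + 1).Partition // OddDistinct p ∧ Odd (maxPart p) ∧
        maxPart p - 1 ∉ p.parts} := by
  refine Nat.card_eq_of_bijective (fun q => ⟨toB q, ?_⟩) ⟨?_, ?_⟩
  · rw [maxB]
    obtain ⟨⟨m, s⟩, h1, h2, h3, h4, h5⟩ := q
    dsimp only at h1 h2 h3 h4 h5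
    refine ⟨fun i hi => ?_, h1.add_one, ?_⟩
    · change ((m + 1) ::ₘ s).count i ≤ 1
      by_cases him : i = m + 1
      · subst him
        rw [Multiset.count_cons_self, Multiset.count_eq_zero_of_notMem]
        intro h
        have := (h3 _ h).2
        omega
      · rw [Multiset.count_cons_of_ne him]; exact h4 i hi
    · change m + 1 - 1 ∉ (m + 1) ::ₘ s
      rw [Multiset.mem_cons]
      rintro (h | h)
      · omega
      · have := (h3 _ h).2
        omega
  · intro a b hab
    have h : toB a = toB b := congrArg Subtype.val hab
    have hm : a.1.1 = b.1.1 := by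
      have : a.1.1 + 1 = b.1.1 + 1 := by rw [← maxB, ← maxB, h]
      omega
    have hp : (a.1.1 + 1) ::ₘ a.1.2 = (b.1.1 + 1) ::ₘ b.1.2 := congrArg Nat.Partition.parts h
    rw [hm, Multiset.cons_inj_right] at hp
    exact Subtype.ext (Prod.ext hm hp)
  · rintro ⟨p, h1, h2, h3⟩
    have hne : p.parts ≠ 0 := by
      intro h
      have := p.parts_sum
      rw [h] at this
      simp at this
    have hmem : p.parts.sup ∈ p.parts := sup_mem_of_ne hne
    have hc : p.parts.count p.parts.sup = 1 :=
      le_antisymm (h1 _ h2) (Multiset.count_pos.2 hmem)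
    obtain ⟨t, ht, hlt⟩ := sup_decomp hc
    have htp : ∀ x ∈ t, x ∈ p.parts := fun x hx => by
      rw [ht]; exact Multiset.mem_cons_of_mem hx
    obtain ⟨c, hcc⟩ := h2
    change p.parts.sup - 1 ∉ p.parts at h3
    change p.parts.sup = _ at hcc
    have hsum := p.parts_sum
    rw [ht, Multiset.sum_cons] at hsum
    have hpos : 0 < p.parts.sup - 1 := by
      by_contra hcon
      have h0 : t = 0 := Multiset.eq_zero_of_forall_notMem fun x hx => by
        have a1 := hlt x hx
        have a2 := p.parts_pos (htp x hx)
        omega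
      rw [h0, Multiset.sum_zero] at hsum
      omega
    refine ⟨⟨(p.parts.sup - 1, t), ⟨c, by dsimp only; omega⟩, hpos,
      fun x hx => ⟨p.parts_pos (htp x hx), ?_⟩, fun i hi => ?_, ?_⟩, ?_⟩
    · have a1 := hlt x hx
      have a2 : x ≠ p.parts.sup - 1 := fun h => h3 (h ▸ htp x hx)
      dsimp only
      omega
    · refine le_trans (Multiset.count_le_of_le i ?_) (h1 i hi)
      conv_rhs => rw [ht]
      exact Multiset.le_cons_self _ _
    · dsimp only
      omega
    · refine Subtype.ext (Nat.Partition.ext ?_)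
      change (p.parts.sup - 1 + 1) ::ₘ t = p.parts
      rw [Nat.sub_add_cancel (by omega)]
      exact ht.symm

theorem o3_eq_card_largest_odd_pred_not_mem : ∀ n : ℕ, 2 ≤ n →
    o3 (n - 1) =
      Nat.card {p : n.Partition // OddDistinct p ∧ Odd (maxPart p) ∧
        maxPart p - 1 ∉ p.parts} := by
  intro n hn
  obtain ⟨k, rfl⟩ : ∃ k, n = k + 1 := ⟨n - 1, by omega⟩
  rw [← cardB k (by omega), Nat.add_sub_cancel, cardA]
end
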